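/- Let p be a prime, let G = SL(2,ℚ_p), let K = SL(2,ℤ_p), let I be the Iwahori subgroup of K consisting of those elements whose lower-left entry lies in pℤ_p, and for an integer λ let a_λ ∈ G be the diagonal matrix diag(p^λ, p^(−λ)). Then for every g ∈ G there exist k ∈ K, i ∈ I and an integer λ ∈ ℤ with g = k·a_λ·i, and the integer λ ∈ ℤ with this property is unique. (This is the decomposition G = G_x·Ã·G_y used in Section 4 of the paper, where λ ranges over all integers, in contrast with the Cartan decomposition.) -/

import Mathlib

/-- The diagonal matrix `diag(p^λ, p^(−λ))` as an element of `SL(2, ℚ_p)`. -/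
noncomputable def aSL (p : ℕ) [Fact p.Prime] (lam : ℤ) :
    Matrix.SpecialLinearGroup (Fin 2) ℚ_[p] :=
  ⟨!![(p : ℚ_[p]) ^ lam, 0; 0, (p : ℚ_[p]) ^ (-lam)], by
    have hp : (p : ℚ_[p]) ≠ 0 := by
      exact_mod_cast (Fact.out : p.Prime).ne_zero
    simp [Matrix.det_fin_two_of, zpow_neg]
    exact mul_inv_cancel₀ (zpow_ne_zero _ hp)⟩

/-- The maximal compact subgroup `K = SL(2, ℤ_p)`, viewed as the set of elements of
`SL(2, ℚ_p)` all of whose entries lie in `ℤ_p` (i.e. have norm at most `1`). -/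
def Kset (p : ℕ) [Fact p.Prime] : Set (Matrix.SpecialLinearGroup (Fin 2) ℚ_[p]) :=
  {g | ∀ i j : Fin 2, ‖(g : Matrix (Fin 2) (Fin 2) ℚ_[p]) i j‖ ≤ 1}

/-- The Iwahori subgroup `I` of `K`, consisting of those elements of `K` whose lower-left
entry lies in `p·ℤ_p`. -/
def Iset (p : ℕ) [Fact p.Prime] : Set (Matrix.SpecialLinearGroup (Fin 2) ℚ_[p]) :=
  {g | g ∈ Kset p ∧
    ∃ y : ℚ_[p], ‖y‖ ≤ 1 ∧ (g : Matrix (Fin 2) (Fin 2) ℚ_[p]) 1 0 = (p : ℚ_[p]) * y}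

/-!
Over any valued field the argument is lattice reduction. Measure a column of `g` by the largest
valuation of its entries; left multiplication by `K` preserves this size. If the first column is at
least as large as the second, `K` moves it onto the first axis, and the remaining upper right entry
is then small enough to be cleared by a column operation in `I`. If it is strictly smaller, `K`
moves the second column onto the second axis instead, and the multiplier clearing the lower left
entry has valuation `< 1`, which is exactly what `I` allows. So `g = k * diag(t, t⁻¹) * i`, and `t`
is determined up to units because right multiplication by `I` cannot shrink the first column of a
diagonal matrix. For a discrete valuation `t` is a unit times a power of the uniformizer.
-/

open Finset Matrix
open scoped MatrixGroups

section CommRing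

variable {R Γ₀ : Type*} [CommRing R] [LinearOrderedCommGroupWithZero Γ₀] (v : Valuation R Γ₀)
  {m n : Type*} [Fintype m]

/-- The size of the `j`-th column of a matrix over a valued ring, measured by the sup norm. -/
def colSup (A : Matrix m n R) (j : n) : Γ₀ :=
  univ.sup fun i => v (A i j)

variable {v} in
lemma colSup_mul_le {k : Matrix m m R} (hk : ∀ i j, v (k i j) ≤ 1) (A : Matrix m n R) (j : n) :
    colSup v (k * A) j ≤ colSup v A j := by
  refine Finset.sup_le fun i _ => v.map_sum_le fun l _ => ?_
  rw [map_mul]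
  exact (mul_le_of_le_one_left' (hk i l)).trans (le_sup (f := fun i => v (A i j)) (mem_univ l))

lemma colSup_fin_two (A : Matrix (Fin 2) n R) (j : n) :
    colSup v A j = max (v (A 0 j)) (v (A 1 j)) := by
  simp [colSup, Fin.univ_succ]

variable [DecidableEq m]

variable (m) in
/-- The group `SL(m, 𝒪)` as a subgroup of `SL(m, R)`, where `𝒪` is the ring of integers of `v`. -/
def integralSL : Subgroup (Matrix.SpecialLinearGroup m R) :=
  (Matrix.SpecialLinearGroup.map v.integer.subtype).range

variable {v}

lemma mem_integralSL_iff {g : Matrix.SpecialLinearGroup m R} :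
    g ∈ integralSL v m ↔ ∀ i j, v (g i j) ≤ 1 := by
  constructor
  · rintro ⟨h, rfl⟩ i j
    exact (h i j).2
  · intro hg
    let h : Matrix m m v.integer := of fun i j => ⟨g i j, hg i j⟩
    have map_h : v.integer.subtype.mapMatrix h = g.1 := rfl
    have det_h : h.det = 1 := by
      apply Subtype.val_injective
      exact (v.integer.subtype.map_det h).trans (map_h ▸ g.det_coe)
    exact ⟨⟨h, det_h⟩, rfl⟩

lemma colSup_mul_of_mem_integralSL {k : Matrix.SpecialLinearGroup m R} (hk : k ∈ integralSL v m)
    (A : Matrix m n R) (j : n) : colSup v (k.1 * A) j = colSup v A j := by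
  refine (colSup_mul_le (mem_integralSL_iff.1 hk) A j).antisymm ?_
  have inv_mul_mul : (k⁻¹).1 * (k.1 * A) = A := by
    rw [← Matrix.mul_assoc, ← Matrix.SpecialLinearGroup.coe_mul, inv_mul_cancel,
      Matrix.SpecialLinearGroup.coe_one, Matrix.one_mul]
  simpa only [inv_mul_mul] using
    colSup_mul_le (mem_integralSL_iff.1 (inv_mem hk)) (k.1 * A) j

variable (v) in
/-- The Iwahori subgroup of `SL(2, R)`: the integral matrices which are upper triangular modulo the
maximal ideal of the ring of integers. -/
def iwahori : Subgroup SL(2, R) where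
  carrier := {g | g ∈ integralSL v (Fin 2) ∧ v (g 1 0) < 1}
  one_mem' := ⟨one_mem _, by simp⟩
  mul_mem' {g h} hg hh := by
    refine ⟨mul_mem hg.1 hh.1, ?_⟩
    have hg₁₁ := mem_integralSL_iff.1 hg.1 1 1
    have hh₀₀ := mem_integralSL_iff.1 hh.1 0 0
    rw [Matrix.SpecialLinearGroup.coe_mul, mul_apply, Fin.sum_univ_two]
    apply v.map_add_lt <;> rw [map_mul]
    · exact mul_lt_one_of_nonneg_of_lt_one_left zero_le hg.2 hh₀₀
    · exact mul_lt_one_of_nonneg_of_lt_one_right hg₁₁ zero_le hh.2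
  inv_mem' {g} hg := ⟨inv_mem hg.1, by simpa [adjugate_fin_two] using hg.2⟩

lemma mem_iwahori_iff {g : SL(2, R)} :
    g ∈ iwahori v ↔ g ∈ integralSL v (Fin 2) ∧ v (g 1 0) < 1 :=
  Iff.rfl

lemma valuation_apply_zero_zero_of_mem_iwahori {i : SL(2, R)} (hi : i ∈ iwahori v) :
    v (i 0 0) = 1 := by
  have entry_le := mem_integralSL_iff.1 hi.1
  have offDiag_lt : v (i 0 1 * i 1 0) < 1 := by
    rw [map_mul]
    exact mul_lt_one_of_nonneg_of_lt_one_right (entry_le 0 1) zero_le hi.2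
  have diag_eq : i 0 0 * i 1 1 = 1 + i 0 1 * i 1 0 := by
    linear_combination (det_fin_two i.1).symm.trans i.det_coe
  have v_diag : v (i 0 0) * v (i 1 1) = 1 := by
    rw [← map_mul, diag_eq, v.map_one_add_of_lt offDiag_lt]
  exact (entry_le 0 0).antisymm (v_diag ▸ mul_le_of_le_one_right zero_le (entry_le 1 1))

variable (R) in
/-- The diagonal torus `t ↦ diag(t, t⁻¹)` of `SL(2, R)`. -/
def torusSL : Rˣ →* SL(2, R) where
  toFun t := ⟨!![(t : R), 0; 0, ↑t⁻¹], by simp⟩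
  map_one' := Subtype.ext (by simp [one_fin_two])
  map_mul' s t := Subtype.ext <| by
    change _ = !![(s : R), 0; 0, ↑s⁻¹] * !![(t : R), 0; 0, ↑t⁻¹]
    simp [mul_comm]

lemma coe_torusSL (t : Rˣ) : (torusSL R t).1 = !![(t : R), 0; 0, ↑t⁻¹] :=
  rfl

lemma coe_torusSL_mul (t : Rˣ) (g : SL(2, R)) :
    (torusSL R t * g).1 = !![t * g 0 0, t * g 0 1; ↑t⁻¹ * g 1 0, ↑t⁻¹ * g 1 1] := by
  rw [Matrix.SpecialLinearGroup.coe_mul, coe_torusSL, eta_fin_two g.1]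
  simp

lemma torusSL_mem_iwahori {t : Rˣ} (ht : v t = 1) : torusSL R t ∈ iwahori v := by
  simp [mem_iwahori_iff, mem_integralSL_iff, Fin.forall_fin_two, coe_torusSL, ht]

lemma valuation_le_colSup_torusSL_mul (t : Rˣ) {i : SL(2, R)} (hi : i ∈ iwahori v) :
    v t ≤ colSup v (torusSL R t * i).1 0 := by
  simp [colSup_fin_two, -Matrix.SpecialLinearGroup.coe_mul, coe_torusSL_mul,
    valuation_apply_zero_zero_of_mem_iwahori hi]

lemma valuation_le_of_mul_torusSL_mul_eq {s t : Rˣ} {k l i j : SL(2, R)}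
    (hk : k ∈ integralSL v (Fin 2)) (hl : l ∈ integralSL v (Fin 2))
    (hi : i ∈ iwahori v) (hj : j ∈ iwahori v)
    (h : k * torusSL R s * i = l * torusSL R t * j) : v s ≤ v t := by
  have torus_eq : torusSL R s * (i * j⁻¹) = k⁻¹ * l * torusSL R t := by
    rw [mul_assoc k] at h
    rw [← mul_assoc, eq_inv_mul_of_mul_eq h]
    group
  calc v s ≤ colSup v (torusSL R s * (i * j⁻¹)).1 0 :=
        valuation_le_colSup_torusSL_mul s (mul_mem hi (inv_mem hj))
    _ = colSup v (torusSL R t).1 0 := by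
        rw [torus_eq, Matrix.SpecialLinearGroup.coe_mul,
          colSup_mul_of_mem_integralSL (mul_mem (inv_mem hk) hl)]
    _ = v t := by simp [colSup_fin_two, coe_torusSL]

theorem valuation_eq_of_mul_torusSL_mul_eq {s t : Rˣ} {k l i j : SL(2, R)}
    (hk : k ∈ integralSL v (Fin 2)) (hl : l ∈ integralSL v (Fin 2))
    (hi : i ∈ iwahori v) (hj : j ∈ iwahori v)
    (h : k * torusSL R s * i = l * torusSL R t * j) : v s = v t :=
  (valuation_le_of_mul_torusSL_mul_eq hk hl hi hj h).antisymm
    (valuation_le_of_mul_torusSL_mul_eq hl hk hj hi h.symm)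

end CommRing

section Field

variable {F Γ₀ : Type*} [Field F] [LinearOrderedCommGroupWithZero Γ₀] {v : Valuation F Γ₀}

lemma exists_eq_mul_of_valuation_le {a b : F} (h : v a ≤ v b) : ∃ x, v x ≤ 1 ∧ a = x * b := by
  rcases eq_or_ne b 0 with rfl | hb
  · exact ⟨0, by simp, by simpa using h⟩
  · refine ⟨a / b, ?_, (div_mul_cancel₀ a hb).symm⟩
    rw [map_div₀]
    exact div_le_one_of_le₀ h zero_le

variable (v) in
lemma exists_mem_integralSL_mulVec_apply_eq_zero (u : Fin 2 → F) (i : Fin 2) :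
    ∃ k ∈ integralSL v (Fin 2), (k.1 *ᵥ u) i = 0 := by
  simp only [mem_integralSL_iff, Fin.forall_fin_two]
  rcases le_total (v (u 0)) (v (u 1)) with h | h <;>
    obtain ⟨x, hx, hu⟩ := exists_eq_mul_of_valuation_le h <;> fin_cases i
  · exact ⟨⟨!![1, -x; 0, 1], by simp⟩, by simp [hx], by simp [mulVec, dotProduct, hu]⟩
  · exact ⟨⟨!![0, -1; 1, -x], by simp⟩, by simp [hx], by simp [mulVec, dotProduct, hu]⟩
  · exact ⟨⟨!![-x, 1; -1, 0], by simp⟩, by simp [hx], by simp [mulVec, dotProduct, hu]⟩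
  · exact ⟨⟨!![1, 0; -x, 1], by simp⟩, by simp [hx], by simp [mulVec, dotProduct, hu]⟩

lemma exists_eq_torusSL_mul_of_apply_one_zero_eq_zero {g : SL(2, F)} (hg : g 1 0 = 0)
    (h : colSup v g.1 1 ≤ colSup v g.1 0) : ∃ t, ∃ i ∈ iwahori v, g = torusSL F t * i := by
  induction g using Matrix.SpecialLinearGroup.fin_two_induction with | h a b c d hdet
  obtain rfl : c = 0 := hg
  have ad_eq : a * d = 1 := by simpa using hdet
  have ha : a ≠ 0 := left_ne_zero_of_mul_eq_one ad_eq
  have v_div : v (b / a) ≤ 1 := by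
    have hba : v b ≤ v a := by simp_all [colSup_fin_two]
    rw [map_div₀]
    exact div_le_one_of_le₀ hba zero_le
  refine ⟨Units.mk0 a ha, ⟨!![1, b / a; 0, 1], by simp⟩,
    mem_iwahori_iff.2 ⟨mem_integralSL_iff.2 ?_, ?_⟩,
    Subtype.ext ((coe_torusSL_mul _ _).trans ?_).symm⟩
  · simpa [Fin.forall_fin_two] using v_div
  · simp
  · simp [mul_div_cancel₀, ha, eq_inv_of_mul_eq_one_right ad_eq]

lemma exists_eq_torusSL_mul_of_apply_zero_one_eq_zero {g : SL(2, F)} (hg : g 0 1 = 0)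
    (h : colSup v g.1 0 < colSup v g.1 1) : ∃ t, ∃ i ∈ iwahori v, g = torusSL F t * i := by
  induction g using Matrix.SpecialLinearGroup.fin_two_induction with | h a b c d hdet
  obtain rfl : b = 0 := hg
  have ad_eq : a * d = 1 := by simpa using hdet
  have hd : d ≠ 0 := right_ne_zero_of_mul_eq_one ad_eq
  have v_div : v (c / d) < 1 := by
    have hcd : v c < v d := by simp_all [colSup_fin_two]
    rw [map_div₀]
    exact (div_lt_one₀ (v.pos_iff.2 hd)).2 hcd
  refine ⟨(Units.mk0 d hd)⁻¹, ⟨!![1, 0; c / d, 1], by simp⟩,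
    mem_iwahori_iff.2 ⟨mem_integralSL_iff.2 ?_, ?_⟩,
    Subtype.ext ((coe_torusSL_mul _ _).trans ?_).symm⟩
  · simpa [Fin.forall_fin_two] using v_div.le
  · simpa using v_div
  · simp [mul_div_cancel₀, hd, eq_inv_of_mul_eq_one_left ad_eq]

variable (v) in
theorem exists_eq_mul_torusSL_mul (g : SL(2, F)) :
    ∃ k ∈ integralSL v (Fin 2), ∃ t, ∃ i ∈ iwahori v, g = k * torusSL F t * i := by
  suffices h : ∃ k ∈ integralSL v (Fin 2), ∃ t, ∃ i ∈ iwahori v, k * g = torusSL F t * i by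
    obtain ⟨k, hk, t, i, hi, e⟩ := h
    exact ⟨k⁻¹, inv_mem hk, t, i, hi, by rw [mul_assoc, ← e, inv_mul_cancel_left]⟩
  rcases le_or_gt (colSup v g.1 1) (colSup v g.1 0) with h | h
  · obtain ⟨k, hk, hkg⟩ := exists_mem_integralSL_mulVec_apply_eq_zero v (g.1.col 0) 1
    refine ⟨k, hk, exists_eq_torusSL_mul_of_apply_one_zero_eq_zero hkg ?_⟩
    simpa only [Matrix.SpecialLinearGroup.coe_mul, colSup_mul_of_mem_integralSL hk] using h
  · obtain ⟨k, hk, hkg⟩ := exists_mem_integralSL_mulVec_apply_eq_zero v (g.1.col 1) 0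
    refine ⟨k, hk, exists_eq_torusSL_mul_of_apply_zero_one_eq_zero hkg ?_⟩
    simpa only [Matrix.SpecialLinearGroup.coe_mul, colSup_mul_of_mem_integralSL hk] using h

variable [v.IsRankOneDiscrete] {π : Fˣ}

lemma exists_zpow_mul_eq_of_isUniformizer (hπ : v.IsUniformizer (π : F)) (t : Fˣ) :
    ∃ (n : ℤ) (u : Fˣ), v u = 1 ∧ t = π ^ n * u := by
  have v_mem : Units.map v t ∈ MonoidWithZeroHom.valueGroup (.ofClass v) :=
    MonoidWithZeroHom.mem_valueGroup _ ⟨t, rfl⟩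
  rw [hπ.zpowers_eq_valueGroup, Subgroup.mem_zpowers_iff] at v_mem
  obtain ⟨n, hn⟩ := v_mem
  have v_zpow : v π ^ n = v t := by simpa using congrArg Units.val hn
  refine ⟨n, (π ^ n)⁻¹ * t, ?_, (mul_inv_cancel_left _ _).symm⟩
  simp [← v_zpow, hπ.val_ne_zero, zpow_ne_zero]

theorem stmt8_general (hπ : v.IsUniformizer (π : F)) (g : SL(2, F)) :
    ∃! n : ℤ, ∃ k ∈ integralSL v (Fin 2), ∃ i ∈ iwahori v, g = k * torusSL F (π ^ n) * i := by
  obtain ⟨k, hk, t, i, hi, rfl⟩ := exists_eq_mul_torusSL_mul v g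
  obtain ⟨n, u, hu, rfl⟩ := exists_zpow_mul_eq_of_isUniformizer hπ t
  refine ⟨n, ⟨k, hk, torusSL F u * i, mul_mem (torusSL_mem_iwahori hu) hi, ?_⟩, ?_⟩
  · simp only [map_mul, mul_assoc]
  · rintro l ⟨k', hk', i', hi', e⟩
    have v_eq := valuation_eq_of_mul_torusSL_mul_eq hk' hk hi' hi e.symm
    apply zpow_right_injective₀ hπ.val_pos hπ.val_lt_one.ne
    simpa [hu] using v_eq

end Field

section Padic

variable {p : ℕ} [Fact p.Prime]

lemma mulValuation_le_one_iff_norm_le_one {x : ℚ_[p]} : Padic.mulValuation x ≤ 1 ↔ ‖x‖ ≤ 1 := by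
  rcases eq_or_ne x 0 with rfl | hx
  · simp
  · have one_lt_p : (1 : ℝ) < p := mod_cast (Fact.out : p.Prime).one_lt
    rw [Padic.norm_eq_zpow_log_mulValuation hx, zpow_le_one_iff_right₀ one_lt_p,
      ← WithZero.log_one, WithZero.log_le_log (by simpa using hx) one_ne_zero]

lemma mulValuation_lt_one_iff_norm_lt_one {x : ℚ_[p]} : Padic.mulValuation x < 1 ↔ ‖x‖ < 1 := by
  rcases eq_or_ne x 0 with rfl | hx
  · simp
  · have one_lt_p : (1 : ℝ) < p := mod_cast (Fact.out : p.Prime).one_lt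
    rw [Padic.norm_eq_zpow_log_mulValuation hx, zpow_lt_one_iff_right₀ one_lt_p,
      ← WithZero.log_one, WithZero.log_lt_log (by simpa using hx) one_ne_zero]

lemma norm_lt_one_iff_exists_eq_prime_mul {x : ℚ_[p]} :
    ‖x‖ < 1 ↔ ∃ y : ℚ_[p], ‖y‖ ≤ 1 ∧ x = p * y := by
  constructor
  · intro hx
    obtain ⟨y, hy⟩ := (PadicInt.norm_lt_one_iff_dvd ⟨x, hx.le⟩).1 hx
    exact ⟨y, y.2, by simpa using congrArg ((↑) : ℤ_[p] → ℚ_[p]) hy⟩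
  · rintro ⟨y, hy, rfl⟩
    rw [norm_mul]
    exact mul_lt_one_of_nonneg_of_lt_one_left (norm_nonneg _) Padic.norm_p_lt_one hy

lemma mulValuation_isUniformizer_prime :
    (Padic.mulValuation (p := p)).IsUniformizer (p : ℚ_[p]) := by
  have v_prime : Padic.mulValuation (p : ℚ_[p]) = WithZero.exp (-1) := by
    simp [(Fact.out : p.Prime).ne_zero]
  rw [Valuation.IsUniformizer.iff, v_prime,
    Valuation.IsRankOneDiscrete.generator_eq_exp_neg_one_of_mem_range ⟨_, v_prime⟩, Units.val_mk0]

lemma mem_Kset_iff {g : SL(2, ℚ_[p])} :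
    g ∈ Kset p ↔ g ∈ integralSL Padic.mulValuation (Fin 2) := by
  simp only [Kset, Set.mem_ofPred_eq, mem_integralSL_iff, mulValuation_le_one_iff_norm_le_one]

lemma mem_Iset_iff {g : SL(2, ℚ_[p])} : g ∈ Iset p ↔ g ∈ iwahori Padic.mulValuation := by
  simp only [Iset, Set.mem_ofPred_eq, mem_iwahori_iff, mem_Kset_iff,
    mulValuation_lt_one_iff_norm_lt_one, norm_lt_one_iff_exists_eq_prime_mul]

lemma aSL_eq_torusSL {π : ℚ_[p]ˣ} (hπ : (π : ℚ_[p]) = p) (n : ℤ) :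
    aSL p n = torusSL ℚ_[p] (π ^ n) :=
  Subtype.ext (by simp [aSL, coe_torusSL, hπ, -map_zpow])

end Padic

/-- Decomposition `G = K·Ã·I`:  every `g ∈ SL(2,ℚ_p)` can be written as `g = k·a_λ·i` with
`k ∈ K`, `i ∈ I` and `λ ∈ ℤ`, and the integer `λ` with this property is unique. -/
theorem stmt8 (p : ℕ) [Fact p.Prime] (g : Matrix.SpecialLinearGroup (Fin 2) ℚ_[p]) :
    ∃! lam : ℤ, ∃ k ∈ Kset p, ∃ i ∈ Iset p, g = k * aSL p lam * i := by
  have hπ := mulValuation_isUniformizer_prime (p := p)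
  simpa only [mem_Kset_iff, mem_Iset_iff, aSL_eq_torusSL (Units.val_mk0 hπ.ne_zero)] using
    stmt8_general (π := Units.mk0 _ hπ.ne_zero) hπ g
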